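/- There exist a constant C > 0 and functions r_B, r_E such that |r_B(ε)| ≤ Cε³ and |r_E(ε₁,…,ε_q)| ≤ C|ε|³ for all sufficiently small ε > 0 and ε = (ε₁,…,ε_q) ∈ (0,∞)^q, and such that the ratio of acceptance probabilities U(τ*) = p_B(ε)/p_E(ε₁,…,ε_q), with p_B(ε) = ∫_{B_ε(τ*)} f_T(τ) dτ over the Euclidean ball of radius ε and p_E = ∫_{D_ε(τ*)} f_T(τ) dτ over the ellipse, equals U(τ*) = (ε^q/∏_{i=1}^q ε_i) · ( f_T(τ*) + ε² Δf_T(τ*)/(2(q+2)) + r_B(ε) ) / ( f_T(τ*) + (1/(2(q+2))) Σ_{i=1}^q ε_i² ∂²_{τ_i} f_T(τ*) + r_E(ε₁,…,ε_q) ), where Δ denotes the Laplacian. -/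

import Mathlib

open MeasureTheory

/-!
After the substitution `τ = τs + a * u`, the integral of `fT` over the ellipse with semi-axes `a` is
`∏ a i` times the integral of `u ↦ fT (τs + a * u)` over the Euclidean unit ball
(`setIntegral_ellipse`), and the ball of radius `ε` is the case where all `a i` are `ε`. The volume of
the unit ball cancels in the ratio, so it suffices to expand the mean of `fT` over the ellipse
(`ellipseMean_expansion`).

This expansion comes from integrating the second-order Taylor formula with cubic error (`taylor2`).
The linear term and the mixed second-order terms vanish by reflection symmetry of the ball, and the
pure second-order terms are governed by the moment `∫ u i ^ 2 = vol / (q + 2)`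
(`integral_euclBall_sq`), which follows from polar coordinates and permutation symmetry.
-/

/-! ### Taylor expansion and coordinate derivatives -/

/-- Second-order Taylor expansion with a cubic remainder. The second derivative is `C¹`, hence Lipschitz
near `x`; two applications of the mean value inequality raise the order of the error from one to
three. -/
theorem taylor2 {E : Type*} [NormedAddCommGroup E] [NormedSpace ℝ E]
    {f : E → ℝ} (hf : ContDiff ℝ 3 f) (x : E) :
    ∃ K ≥ 0, ∃ δ > 0, ∀ h : E, ‖h‖ < δ →
      |f (x + h) - (f x + fderiv ℝ f x h + fderiv ℝ (fderiv ℝ f) x h h / 2)| ≤ K * ‖h‖ ^ 3 := by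
  have hf1 : ContDiff ℝ 2 (fderiv ℝ f) := hf.fderiv_right (by norm_num)
  have hf2 : ContDiff ℝ 1 (fderiv ℝ (fderiv ℝ f)) := hf1.fderiv_right (by norm_num)
  have hd0 : Differentiable ℝ f := hf.differentiable (by norm_num)
  have hd1 : Differentiable ℝ (fderiv ℝ f) := hf1.differentiable (by norm_num)
  obtain ⟨K, t, ht, hK⟩ := hf2.contDiffAt.exists_lipschitzOnWith (x := x)
  obtain ⟨δ, hδ, hball⟩ := Metric.mem_nhds_iff.1 ht
  have hx : x ∈ t := mem_of_mem_nhds ht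
  have hD1 : ∀ h : E, ‖h‖ < δ →
      ‖fderiv ℝ f (x + h) - fderiv ℝ f x - fderiv ℝ (fderiv ℝ f) x h‖ ≤ K * ‖h‖ ^ 2 := by
    intro h hh
    have := (convex_closedBall x ‖h‖).norm_image_sub_le_of_norm_hasFDerivWithin_le'
      (f := fderiv ℝ f) (f' := fderiv ℝ (fderiv ℝ f)) (φ := fderiv ℝ (fderiv ℝ f) x)
      (C := K * ‖h‖) (x := x) (y := x + h)
      (fun y _ => (hd1 y).hasFDerivAt.hasFDerivWithinAt)
      (fun y hy => by
        have hy' : dist y x ≤ ‖h‖ := hy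
        have h1 := hK.dist_le_mul y (hball (lt_of_le_of_lt hy' hh)) x hx
        rw [dist_eq_norm] at h1
        exact h1.trans (by gcongr))
      (by simp) (by simp)
    simpa [pow_two, mul_assoc] using this
  refine ⟨K, K.2, δ, hδ, fun h hh => ?_⟩
  -- the mean value inequality along the segment `t ↦ x + t • h`
  have hline : ∀ s : ℝ, HasDerivAt (fun s : ℝ => x + s • h) h s := fun s => by
    simpa using ((hasDerivAt_id s).smul_const h).const_add x
  have hψ : ∀ s : ℝ, HasDerivAt
      (fun s : ℝ => f (x + s • h) - (s * fderiv ℝ f x h + s ^ 2 * (fderiv ℝ (fderiv ℝ f) x h h / 2)))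
      ((fderiv ℝ f (x + s • h) - fderiv ℝ f x - fderiv ℝ (fderiv ℝ f) x (s • h)) h) s := by
    intro s
    have h1 := (hd0 (x + s • h)).hasFDerivAt.comp_hasDerivAt s (hline s)
    have h2 := ((hasDerivAt_id s).mul_const (fderiv ℝ f x h)).add
      ((hasDerivAt_pow 2 s).mul_const (fderiv ℝ (fderiv ℝ f) x h h / 2))
    refine (h1.sub h2).congr_deriv ?_
    simp
    ring
  have := (convex_Icc (0 : ℝ) 1).norm_image_sub_le_of_norm_hasDerivWithin_le
    (C := K * ‖h‖ ^ 3) (x := 0) (y := 1) (fun s _ => (hψ s).hasDerivWithinAt)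
    (fun s hs => by
      have hs' : ‖s • h‖ ≤ ‖h‖ := by
        rw [norm_smul, Real.norm_of_nonneg hs.1]
        exact mul_le_of_le_one_left (norm_nonneg h) hs.2
      refine (ContinuousLinearMap.le_opNorm _ _).trans ?_
      calc _ ≤ (K * ‖s • h‖ ^ 2) * ‖h‖ := by gcongr; exact hD1 _ (hs'.trans_lt hh)
        _ ≤ (K * ‖h‖ ^ 2) * ‖h‖ := by gcongr
        _ = _ := by ring) (by simp) (by simp)
  rw [Real.norm_eq_abs] at this
  refine le_trans (le_of_eq ?_) (this.trans_eq (by norm_num))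
  congr 1
  simp
  ring

theorem deriv2_update {q : ℕ} {f : (Fin q → ℝ) → ℝ} (hf : ContDiff ℝ 3 f) (x : Fin q → ℝ)
    (i : Fin q) :
    deriv (deriv (fun t => f (Function.update x i t))) (x i) =
      fderiv ℝ (fderiv ℝ f) x (Pi.single i 1) (Pi.single i 1) := by
  have hf1 : ContDiff ℝ 2 (fderiv ℝ f) := hf.fderiv_right (by norm_num)
  have hd0 : Differentiable ℝ f := hf.differentiable (by norm_num)
  have hd1 : Differentiable ℝ (fderiv ℝ f) := hf1.differentiable (by norm_num)
  have h1 : deriv (fun t => f (Function.update x i t)) =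
      fun t => fderiv ℝ f (Function.update x i t) (Pi.single i 1) := by
    funext t
    exact ((hd0 _).hasFDerivAt.comp_hasDerivAt t (hasDerivAt_update x i t)).deriv
  rw [h1]
  have h2 := (hd1 (Function.update x i (x i))).hasFDerivAt.comp_hasDerivAt (x i)
    (hasDerivAt_update x i (x i))
  have h3 := h2.clm_apply (hasDerivAt_const (x i) (Pi.single i (1:ℝ)))
  simpa using h3.deriv

/-! ### Rescaling of coordinates -/

/-- Coordinatewise rescaling `τ = a * u` in an integral over `ℝ^q`; negative `a i` are allowed, so that
reflections in coordinate hyperplanes are covered. -/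
theorem integral_scale {q : ℕ} (a : Fin q → ℝ) (ha : ∀ i, a i ≠ 0) (F : (Fin q → ℝ) → ℝ) :
    ∫ τ, F τ = |∏ i, a i| * ∫ u, F (a * u) := by
  have hdet : (Matrix.diagonal a).det ≠ 0 := by
    simp [Matrix.det_diagonal, Finset.prod_ne_zero_iff, ha]
  have hinj : Function.Injective (Matrix.toLin' (Matrix.diagonal a)) := by
    intro u v huv
    funext i
    have := congrFun huv i
    simpa [Matrix.mulVec_diagonal, ha i] using this
  conv_lhs => rw [← Real.smul_map_diagonal_volume_pi hdet]
  rw [integral_smul_measure, MeasurableEmbedding.integral_map]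
  · rw [ENNReal.toReal_ofReal (abs_nonneg _), Matrix.det_diagonal, smul_eq_mul]
    congr 2
    funext u
    congr 1
    funext i
    simp [Matrix.mulVec_diagonal]
  · exact ((Matrix.toLin' (Matrix.diagonal a)).isClosedEmbedding_of_injective
      (LinearMap.ker_eq_bot.2 hinj)).measurableEmbedding

/-! ### Moments of the Euclidean unit ball -/

/-- The closed Euclidean unit ball in `Fin q → ℝ`, whose own norm is the sup norm. -/
def euclBall (q : ℕ) : Set (Fin q → ℝ) := {u | ∑ i, u i ^ 2 ≤ 1}

theorem norm_le_one_of_mem_euclBall {q : ℕ} {u : Fin q → ℝ} (hu : u ∈ euclBall q) : ‖u‖ ≤ 1 := by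
  rw [pi_norm_le_iff_of_nonneg zero_le_one]
  intro i
  have h1 : u i ^ 2 ≤ 1 :=
    (Finset.single_le_sum (fun j _ => sq_nonneg (u j)) (Finset.mem_univ i)).trans hu
  exact abs_le_one_iff_mul_self_le_one.2 (by nlinarith)

theorem isCompact_euclBall (q : ℕ) : IsCompact (euclBall q) := by
  refine Metric.isCompact_of_isClosed_isBounded
    (isClosed_le (by fun_prop) continuous_const) ?_
  exact (Metric.isBounded_closedBall (x := (0 : Fin q → ℝ)) (r := 1)).subset fun u hu =>
    mem_closedBall_zero_iff.2 (norm_le_one_of_mem_euclBall hu)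

theorem measurableSet_euclBall (q : ℕ) : MeasurableSet (euclBall q) :=
  (isCompact_euclBall q).measurableSet

theorem integrableOn_euclBall {q : ℕ} {F : (Fin q → ℝ) → ℝ} (hF : Continuous F) :
    IntegrableOn F (euclBall q) :=
  hF.continuousOn.integrableOn_compact (isCompact_euclBall q)

/-- Radial moments of the unit ball, by polar coordinates on `EuclideanSpace`. The case `k = 0` gives
the volume of the ball, the case `k = 2` its second moment. -/
theorem integral_euclBall_radial (q : ℕ) (hq : 1 ≤ q) (k : ℕ) :
    ∫ u in euclBall q, √(∑ i, u i ^ 2) ^ k =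
      q * volume.real (Metric.ball (0 : EuclideanSpace ℝ (Fin q)) 1) / (q + k) := by
  have : Nonempty (Fin q) := ⟨⟨0, hq⟩⟩
  have h1 : ∫ u in euclBall q, √(∑ i, u i ^ 2) ^ k =
      ∫ x : EuclideanSpace ℝ (Fin q), (Set.Iic (1:ℝ)).indicator (fun r => r ^ k) ‖x‖ := by
    rw [← integral_indicator (measurableSet_euclBall q),
      ← (EuclideanSpace.volume_preserving_symm_measurableEquiv_toLp (Fin q)).integral_comp']
    congr 1
    funext x
    have hx : ‖x‖ = √(∑ i, x i ^ 2) := by simp [EuclideanSpace.norm_eq]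
    have hmem : (MeasurableEquiv.toLp 2 (Fin q → ℝ)).symm x ∈ euclBall q ↔ ‖x‖ ∈ Set.Iic (1:ℝ) := by
      rw [hx, Set.mem_Iic, Real.sqrt_le_iff, one_pow]
      exact ⟨fun h => ⟨zero_le_one, h⟩, fun h => h.2⟩
    by_cases h : ‖x‖ ∈ Set.Iic (1:ℝ)
    · rw [Set.indicator_of_mem h, Set.indicator_of_mem (hmem.2 h), hx]
      rfl
    · rw [Set.indicator_of_notMem h, Set.indicator_of_notMem (fun h' => h (hmem.1 h'))]
  have h2 : ∫ y in Set.Ioi (0:ℝ), y ^ (q - 1) • (Set.Iic (1:ℝ)).indicator (fun r => r ^ k) y =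
      1 / (q + k) := by
    have h3 : (fun y : ℝ => y ^ (q - 1) • (Set.Iic (1:ℝ)).indicator (fun r => r ^ k) y) =
        (Set.Iic (1:ℝ)).indicator (fun r => r ^ (q - 1 + k)) := by
      funext y
      by_cases h : y ∈ Set.Iic (1:ℝ)
      · rw [Set.indicator_of_mem h, Set.indicator_of_mem h, smul_eq_mul, pow_add]
      · rw [Set.indicator_of_notMem h, Set.indicator_of_notMem h, smul_zero]
    rw [h3, setIntegral_indicator measurableSet_Iic, Set.Ioi_inter_Iic,
      ← intervalIntegral.integral_of_le zero_le_one, integral_pow]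
    have : ((q - 1 + k : ℕ) : ℝ) + 1 = q + k := by
      rw [← Nat.cast_add_one, ← Nat.cast_add]
      congr 1
      omega
    rw [this]
    simp
  rw [h1, integral_fun_norm_addHaar, finrank_euclideanSpace, Fintype.card_fin, h2]
  simp only [nsmul_eq_mul, smul_eq_mul]
  ring

theorem volume_euclBall_pos (q : ℕ) (hq : 1 ≤ q) : 0 < volume.real (euclBall q) := by
  have h := integral_euclBall_radial q hq 0
  have hq' : (0:ℝ) < q := by exact_mod_cast hq
  simp only [pow_zero, integral_const, smul_eq_mul, mul_one, Nat.cast_zero, add_zero,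
    measureReal_restrict_apply_univ] at h
  rw [h, mul_div_cancel_left₀ _ hq'.ne']
  exact ENNReal.toReal_pos (Metric.measure_ball_pos _ _ one_pos).ne' measure_ball_lt_top.ne

theorem integral_euclBall_normSq (q : ℕ) (hq : 1 ≤ q) :
    ∫ u in euclBall q, ∑ i, u i ^ 2 = q * volume.real (euclBall q) / (q + 2) := by
  have h := integral_euclBall_radial q hq 0
  have h2 := integral_euclBall_radial q hq 2
  have hq' : (0:ℝ) < q := by exact_mod_cast hq
  simp only [pow_zero, integral_const, smul_eq_mul, mul_one, Nat.cast_zero, add_zero,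
    measureReal_restrict_apply_univ] at h
  rw [h, mul_div_cancel_left₀ _ hq'.ne']
  rw [Nat.cast_two] at h2
  rw [← h2]
  congr 1
  funext u
  exact (Real.sq_sqrt (Finset.sum_nonneg fun i _ => sq_nonneg (u i))).symm

/-- Integrals over the ball are invariant under sign changes of coordinates. -/
theorem integral_euclBall_scale {q : ℕ} (a : Fin q → ℝ) (ha : ∀ i, a i ^ 2 = 1)
    (F : (Fin q → ℝ) → ℝ) :
    ∫ u in euclBall q, F (a * u) = ∫ u in euclBall q, F u := by
  have ha0 : ∀ i, a i ≠ 0 := fun i h => by simpa [h] using ha i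
  have hp : |∏ i, a i| = 1 := by
    rw [← sq_eq_sq₀ (abs_nonneg _) zero_le_one, sq_abs, ← Finset.prod_pow]
    simp [ha]
  rw [← integral_indicator (measurableSet_euclBall q), ← integral_indicator (measurableSet_euclBall q),
    integral_scale a ha0 ((euclBall q).indicator F), hp, one_mul]
  congr 1
  funext u
  have hmem : a * u ∈ euclBall q ↔ u ∈ euclBall q := by
    simp [euclBall, mul_pow, ha]
  by_cases h : u ∈ euclBall q
  · rw [Set.indicator_of_mem h, Set.indicator_of_mem (hmem.2 h)]
  · rw [Set.indicator_of_notMem h, Set.indicator_of_notMem (fun h' => h (hmem.1 h'))]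

theorem integral_euclBall_linear {q : ℕ} (ℓ : (Fin q → ℝ) →ₗ[ℝ] ℝ) :
    ∫ u in euclBall q, ℓ u = 0 := by
  have h := integral_euclBall_scale (q := q) (-1) (by simp) ℓ
  simp only [neg_mul, one_mul, map_neg, integral_neg] at h
  linarith

theorem integral_euclBall_mixed {q : ℕ} {i j : Fin q} (hij : i ≠ j) :
    ∫ u in euclBall q, u i * u j = 0 := by
  have h := integral_euclBall_scale (q := q) (Function.update 1 i (-1))
    (fun k => by by_cases hk : k = i <;> simp [hk]) (fun u => u i * u j)
  simp only [Pi.mul_apply, Function.update_self, Function.update_of_ne hij.symm, Pi.one_apply,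
    neg_mul, one_mul, integral_neg] at h
  linarith

/-- The `q` coordinates have equal second moments, since the ball is invariant under swapping two of
them, and these moments add up to `integral_euclBall_normSq`. -/
theorem integral_euclBall_sq (q : ℕ) (hq : 1 ≤ q) (i : Fin q) :
    ∫ u in euclBall q, u i ^ 2 = volume.real (euclBall q) / (q + 2) := by
  have hq' : (0:ℝ) < q := by exact_mod_cast hq
  have hsymm : ∀ j : Fin q, ∫ u in euclBall q, u j ^ 2 = ∫ u in euclBall q, u i ^ 2 := by
    intro j
    have hmp := volume_measurePreserving_piCongrLeft (fun _ : Fin q => ℝ) (Equiv.swap i j)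
    have hval : ∀ (u : Fin q → ℝ) (k : Fin q),
        MeasurableEquiv.piCongrLeft (fun _ : Fin q => ℝ) (Equiv.swap i j) u k =
          u (Equiv.swap i j k) := by
      intro u k
      have := MeasurableEquiv.piCongrLeft_apply_apply (β := fun _ : Fin q => ℝ)
        (Equiv.swap i j) u (Equiv.swap i j k)
      simpa using this
    rw [← integral_indicator (measurableSet_euclBall q), ← integral_indicator (measurableSet_euclBall q),
      ← hmp.integral_comp']
    congr 1
    funext u
    have hmem : MeasurableEquiv.piCongrLeft (fun _ : Fin q => ℝ) (Equiv.swap i j) u ∈ euclBall q ↔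
        u ∈ euclBall q := by
      simp only [euclBall, Set.mem_ofPred_eq, hval]
      rw [Equiv.sum_comp (Equiv.swap i j) (fun k => u k ^ 2)]
    by_cases h : u ∈ euclBall q
    · rw [Set.indicator_of_mem h, Set.indicator_of_mem (hmem.2 h), hval, Equiv.swap_apply_right]
    · rw [Set.indicator_of_notMem h, Set.indicator_of_notMem (fun h' => h (hmem.1 h'))]
  have h := integral_euclBall_normSq q hq
  rw [integral_finsetSum _ (fun j _ => integrableOn_euclBall (by fun_prop)),
    Finset.sum_congr rfl (fun j _ => hsymm j)] at h
  simp only [Finset.sum_const, Finset.card_univ, Fintype.card_fin, nsmul_eq_mul] at h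
  rw [mul_div_assoc] at h
  exact mul_left_cancel₀ hq'.ne' h

theorem integral_euclBall_quadratic (q : ℕ) (hq : 1 ≤ q)
    (H : (Fin q → ℝ) →L[ℝ] (Fin q → ℝ) →L[ℝ] ℝ) (a : Fin q → ℝ) :
    ∫ u in euclBall q, H (a * u) (a * u) =
      volume.real (euclBall q) / (q + 2) * ∑ i, a i ^ 2 * H (Pi.single i 1) (Pi.single i 1) := by
  have hexp : ∀ u : Fin q → ℝ, H (a * u) (a * u) =
      ∑ i, ∑ j, (a i * a j * H (Pi.single i 1) (Pi.single j 1)) * (u i * u j) := by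
    intro u
    conv_lhs => rw [pi_eq_sum_univ' (a * u)]
    simp only [map_sum, map_smul, _root_.sum_apply, _root_.smul_apply,
      smul_eq_mul, Pi.mul_apply, Finset.mul_sum]
    rw [Finset.sum_comm]
    refine Finset.sum_congr rfl fun i _ => Finset.sum_congr rfl fun j _ => by ring
  simp only [hexp]
  rw [integral_finsetSum _ (fun i _ => integrableOn_euclBall (by fun_prop)), Finset.mul_sum]
  refine Finset.sum_congr rfl fun i _ => ?_
  rw [integral_finsetSum _ (fun j _ => integrableOn_euclBall (by fun_prop)),
    Finset.sum_eq_single i]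
  · simp only [integral_const_mul, ← pow_two, integral_euclBall_sq q hq i]
    ring
  · intro j _ hj
    rw [integral_const_mul, integral_euclBall_mixed hj.symm, mul_zero]
  · simp

/-! ### Means over ellipses -/

/-- The integral over the ellipse with semi-axes `a` centred at `x`, pulled back to the unit ball. -/
theorem setIntegral_ellipse {q : ℕ} (a : Fin q → ℝ) (ha : ∀ i, 0 < a i) (x : Fin q → ℝ)
    (f : (Fin q → ℝ) → ℝ) :
    ∫ τ in {τ : Fin q → ℝ | ∑ i, ((τ i - x i) / a i) ^ 2 ≤ 1}, f τ =
      (∏ i, a i) * ∫ u in euclBall q, f (x + a * u) := by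
  have hmeas : MeasurableSet {τ : Fin q → ℝ | ∑ i, ((τ i - x i) / a i) ^ 2 ≤ 1} :=
    (isClosed_le (by fun_prop) continuous_const).measurableSet
  rw [← integral_indicator hmeas, ← integral_indicator (measurableSet_euclBall q),
    ← integral_add_left_eq_self _ x, integral_scale a (fun i => (ha i).ne'),
    abs_of_pos (Finset.prod_pos fun i _ => ha i)]
  congr 2
  funext u
  have hmem : x + a * u ∈ {τ : Fin q → ℝ | ∑ i, ((τ i - x i) / a i) ^ 2 ≤ 1} ↔ u ∈ euclBall q := by
    have : ∀ i, a i * u i / a i = u i := fun i => mul_div_cancel_left₀ _ (ha i).ne'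
    simp [euclBall, this]
  by_cases h : u ∈ euclBall q
  · rw [Set.indicator_of_mem h, Set.indicator_of_mem (hmem.2 h)]
  · rw [Set.indicator_of_notMem h, Set.indicator_of_notMem (fun h' => h (hmem.1 h'))]

/-- The average of `f` over the ellipse with semi-axes `a` centred at `x`, written as an average over
the unit ball. -/
noncomputable def ellipseMean {q : ℕ} (f : (Fin q → ℝ) → ℝ) (x a : Fin q → ℝ) : ℝ :=
  (∫ u in euclBall q, f (x + a * u)) / volume.real (euclBall q)

/-- The remainder is measured in the sup norm of `a`, which equals `ε` for the ball of radius `ε` and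
is at most the Euclidean norm in general. -/
theorem ellipseMean_expansion {q : ℕ} (hq : 1 ≤ q) {f : (Fin q → ℝ) → ℝ} (hf : ContDiff ℝ 3 f)
    (x : Fin q → ℝ) :
    ∃ K ≥ 0, ∃ δ > 0, ∀ a : Fin q → ℝ, ‖a‖ < δ →
      |ellipseMean f x a - (f x + (1 / (2 * ((q : ℝ) + 2))) *
        ∑ i, a i ^ 2 * deriv (deriv (fun t => f (Function.update x i t))) (x i))| ≤
          K * ‖a‖ ^ 3 := by
  obtain ⟨K, hK, δ, hδ, hT⟩ := taylor2 hf x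
  refine ⟨K, hK, δ, hδ, fun a ha => ?_⟩
  have hV := volume_euclBall_pos q hq
  set V := volume.real (euclBall q) with hVdef
  set H := fderiv ℝ (fderiv ℝ f) x with hH
  have hfc : Continuous f := hf.continuous
  have hmulc : Continuous fun u : Fin q → ℝ => a * u := by fun_prop
  have hi1 : IntegrableOn (fun u => f (x + a * u)) (euclBall q) :=
    integrableOn_euclBall (by fun_prop)
  have hi2 : IntegrableOn (fun _ : Fin q → ℝ => f x) (euclBall q) :=
    integrableOn_euclBall (by fun_prop)
  have hi3 : IntegrableOn (fun u => fderiv ℝ f x (a * u)) (euclBall q) :=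
    integrableOn_euclBall (by fun_prop)
  have hi4 : IntegrableOn (fun u => H (a * u) (a * u) / 2) (euclBall q) :=
    integrableOn_euclBall (by fun_prop)
  have hi23 : IntegrableOn (fun u => f x + fderiv ℝ f x (a * u)) (euclBall q) := hi2.add hi3
  have hi234 : IntegrableOn
      (fun u => f x + fderiv ℝ f x (a * u) + H (a * u) (a * u) / 2) (euclBall q) := hi23.add hi4
  have hlin : ∫ u in euclBall q, fderiv ℝ f x (a * u) = 0 :=
    integral_euclBall_linear ((fderiv ℝ f x).toLinearMap ∘ₗ LinearMap.mulLeft ℝ a)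
  have hpoly : ∫ u in euclBall q, (f x + fderiv ℝ f x (a * u) + H (a * u) (a * u) / 2) =
      V * (f x + (1 / (2 * ((q : ℝ) + 2))) *
        ∑ i, a i ^ 2 * deriv (deriv (fun t => f (Function.update x i t))) (x i)) := by
    rw [integral_add hi23 hi4, integral_add hi2 hi3, hlin, integral_div,
      integral_euclBall_quadratic q hq, setIntegral_const]
    simp only [deriv2_update hf, smul_eq_mul, ← hVdef, ← hH]
    field_simp
    ring
  have hbound : ‖∫ u in euclBall q,
      (f (x + a * u) - (f x + fderiv ℝ f x (a * u) + H (a * u) (a * u) / 2))‖ ≤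
        K * ‖a‖ ^ 3 * V := by
    refine norm_setIntegral_le_of_norm_le_const (isCompact_euclBall q).measure_lt_top fun u hu => ?_
    have hau : ‖a * u‖ ≤ ‖a‖ :=
      (norm_mul_le a u).trans (mul_le_of_le_one_right (norm_nonneg a) (norm_le_one_of_mem_euclBall hu))
    exact (hT (a * u) (hau.trans_lt ha)).trans (by gcongr)
  rw [integral_sub hi1 hi234, hpoly, Real.norm_eq_abs] at hbound
  rw [ellipseMean, ← hVdef, div_sub' hV.ne', abs_div, abs_of_pos hV, div_le_iff₀ hV]
  exact hbound

/-- The ratio of acceptance probabilities (ball over ellipse) satisfies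
p_B(ε)/p_E(ε₁,…,ε_q) = (ε^q/∏ ε_i) · (f_T(τ*) + ε² Δf_T(τ*)/(2(q+2)) + r_B(ε)) /
(f_T(τ*) + (1/(2(q+2))) Σ_i ε_i² ∂²_{τ_i} f_T(τ*) + r_E(ε)), with |r_B(ε)| ≤ Cε³ and
|r_E(ε)| ≤ C|ε|³ for all sufficiently small ε. -/
theorem abc_rejection_rate_ratio_expansion
    (q : ℕ) (hq : 1 ≤ q)
    (τs : Fin q → ℝ)
    (fT : (Fin q → ℝ) → ℝ)
    (hfT_smooth : ContDiff ℝ 3 fT)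
    (hfT_pos : ∀ τ, 0 < fT τ)
    (hfT_int : Integrable fT)
    (hfT_prob : ∫ τ, fT τ = 1) :
    ∃ C > 0, ∃ δ > 0, ∃ rB : ℝ → ℝ, ∃ rE : (Fin q → ℝ) → ℝ,
      (∀ ε : ℝ, 0 < ε → ε < δ → |rB ε| ≤ C * ε ^ 3) ∧
      (∀ εv : Fin q → ℝ, (∀ i, 0 < εv i) → Real.sqrt (∑ i, εv i ^ 2) < δ →
        |rE εv| ≤ C * Real.sqrt (∑ i, εv i ^ 2) ^ 3) ∧
      (∀ (ε : ℝ) (εv : Fin q → ℝ), 0 < ε → ε < δ →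
        (∀ i, 0 < εv i) → Real.sqrt (∑ i, εv i ^ 2) < δ →
        (∫ τ in {τ : Fin q → ℝ | ∑ i, (τ i - τs i) ^ 2 ≤ ε ^ 2}, fT τ) /
            (∫ τ in {τ : Fin q → ℝ | ∑ i, ((τ i - τs i) / εv i) ^ 2 ≤ 1}, fT τ)
          = (ε ^ q / ∏ i, εv i) *
              ((fT τs +
                  ε ^ 2 * (∑ i, deriv (deriv (fun t => fT (Function.update τs i t))) (τs i)) /
                    (2 * ((q : ℝ) + 2)) + rB ε) /
                (fT τs +
                  (1 / (2 * ((q : ℝ) + 2))) *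
                    (∑ i, εv i ^ 2 *
                      deriv (deriv (fun t => fT (Function.update τs i t))) (τs i)) +
                  rE εv))) := by
  obtain ⟨K, hK, δ, hδ, hexp⟩ := ellipseMean_expansion hq hfT_smooth τs
  have : Nonempty (Fin q) := ⟨⟨0, hq⟩⟩
  have hV := volume_euclBall_pos q hq
  have hnorm : ∀ a : Fin q → ℝ, ‖a‖ ≤ √(∑ i, a i ^ 2) := by
    intro a
    rw [pi_norm_le_iff_of_nonneg (Real.sqrt_nonneg _)]
    intro i
    exact Real.abs_le_sqrt
      (Finset.single_le_sum (f := fun j => a j ^ 2) (fun j _ => sq_nonneg (a j))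
        (Finset.mem_univ i))
  -- both acceptance probabilities are the volume of the region times the mean of `fT` over it
  have hpE : ∀ a : Fin q → ℝ, (∀ i, 0 < a i) →
      ∫ τ in {τ : Fin q → ℝ | ∑ i, ((τ i - τs i) / a i) ^ 2 ≤ 1}, fT τ =
        (∏ i, a i) * volume.real (euclBall q) * ellipseMean fT τs a := by
    intro a ha
    rw [setIntegral_ellipse a ha, ellipseMean]
    field_simp
  have hpB : ∀ ε : ℝ, 0 < ε →
      ∫ τ in {τ : Fin q → ℝ | ∑ i, (τ i - τs i) ^ 2 ≤ ε ^ 2}, fT τ =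
        ε ^ q * volume.real (euclBall q) * ellipseMean fT τs (fun _ => ε) := by
    intro ε hε
    have hset : {τ : Fin q → ℝ | ∑ i, (τ i - τs i) ^ 2 ≤ ε ^ 2} =
        {τ : Fin q → ℝ | ∑ i, ((τ i - τs i) / ε) ^ 2 ≤ 1} := by
      ext τ
      simp only [Set.mem_ofPred_eq, div_pow, ← Finset.sum_div]
      rw [div_le_one (by positivity)]
    rw [hset, hpE (fun _ => ε) (fun _ => hε)]
    simp
  refine ⟨K + 1, by linarith, δ, hδ,
    fun ε => ellipseMean fT τs (fun _ => ε) - (fT τs +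
      ε ^ 2 * (∑ i, deriv (deriv (fun t => fT (Function.update τs i t))) (τs i)) /
        (2 * ((q : ℝ) + 2))),
    fun a => ellipseMean fT τs a - (fT τs + (1 / (2 * ((q : ℝ) + 2))) *
      (∑ i, a i ^ 2 * deriv (deriv (fun t => fT (Function.update τs i t))) (τs i))),
    ?_, ?_, ?_⟩
  · intro ε hε hεδ
    have hn : ‖(fun _ : Fin q => ε)‖ = ε := by
      rw [pi_norm_const, Real.norm_of_nonneg hε.le]
    have h := hexp (fun _ => ε) (hn.trans_lt hεδ)
    rw [hn, ← Finset.mul_sum, one_div_mul_eq_div] at h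
    exact h.trans (by gcongr; linarith)
  · intro a _ haδ
    refine (hexp a ((hnorm a).trans_lt haδ)).trans ?_
    gcongr
    · linarith
    · exact hnorm a
  · intro ε a hε _ ha _
    rw [hpB ε hε, hpE a ha, add_sub_cancel, add_sub_cancel, ← mul_div_mul_comm,
      mul_right_comm, mul_right_comm (∏ i, a i), mul_div_mul_right _ _ hV.ne']
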